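/- Let (R, 𝔪, k) be a regular local ring of dimension 3, I = (φ_1, …, φ_n) ⊆ 𝔪² an ideal with pd_R(R/I) = 3, σ an index set, (F_•, d_•) a minimal DG-algebra free resolution of R/I, (K_•, m_•) the Koszul complex resolving k, and Q_1 : F_2 → ⊕_{i=1}^t K_1, Q_2 : F_3 → ⊕_{i=1}^t K_2 the comparison maps of the trimming complex T_• resolving R/tm_σ(I). Then the image of F̄_1 ·_F F̄_1 in F̄_2 is contained in ker(Q_1 ⊗ k), and the image of F̄_1 ·_F F̄_2 in F̄_3 is contained in ker(Q_2 ⊗ k). Consequently, the only possibly nontrivial products in the graded k-algebra T̄_• are those of the forms F̄_1' · F̄_1' and F̄_1' · F̄_2. -/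

import Mathlib

open IsLocalRing

/-!
STATEMENT 6 (Lemma 4.5 of the paper): let `(R, 𝔪, k)` be a regular local ring of
dimension 3 (`𝔪 = (x 0, x 1, x 2)` with `x` a regular sequence), `I ⊆ 𝔪²` an ideal
with `pd_R (R/I) = 3`, `σ` an index set, `(F_•, d_•)` a minimal DG-algebra free
resolution of `R/I` (its degree-1 term decomposed as `F₁' × (Fin t → R)`, the `t`
trimmed generators being the coordinates), `(K_•, m_•)` the Koszul complex resolving
`k` (given here explicitly on `K₁ = K₂ = Fin 3 → R`, `K₃ = R`, together with its
DG-algebra products `k11 : K₁ × K₁ → K₂`, `k12 : K₁ × K₂ → K₃`), and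
`q1 i = Q₁`-components `F₂ → K₁`, `q2 i = Q₂`-components `F₃ → K₂` the comparison maps
of the trimming complex `T_•` resolving `R/tm_σ(I)`.

Conclusion: the image of `F̄₁ ·_F F̄₁` in `F̄₂` lies in `ker (Q₁ ⊗ k)` and the image of
`F̄₁ ·_F F̄₂` in `F̄₃` lies in `ker (Q₂ ⊗ k)` (elementwise: `q1 i (μ11 u v) ∈ 𝔪K₁` and
`q2 i (μ12 u w) ∈ 𝔪K₂`); consequently, for the DG-algebra structure of Theorem 3.2 on
`T_•`, the only possibly nontrivial products of `T̄_•` are `F̄₁'·F̄₁'` and `F̄₁'·F̄₂`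
(i.e. every product agrees, modulo `𝔪 • T`, with the product of the `F`-components).
-/
universe u

section TrimmingSetup

variable {R : Type u} [CommRing R] {t : ℕ}
variable {F1' F2 F3 : Type u}
variable [AddCommGroup F1'] [Module R F1'] [AddCommGroup F2] [Module R F2]
variable [AddCommGroup F3] [Module R F3]
variable {G1 G2 G3 : Fin t → Type u}
variable [∀ i, AddCommGroup (G1 i)] [∀ i, Module R (G1 i)]
variable [∀ i, AddCommGroup (G2 i)] [∀ i, Module R (G2 i)]
variable [∀ i, AddCommGroup (G3 i)] [∀ i, Module R (G3 i)]

/-- The differential `ℓ₁` of the trimming complex (Remark 2.9). -/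
def Tl1 (d1 : (F1' × (Fin t → R)) →ₗ[R] R) (m1 : ∀ i, G1 i →ₗ[R] R) :
    (F1' × (∀ i, G1 i)) → R :=
  fun z => d1 (z.1, 0) - ∑ i, m1 i (z.2 i) * d1 (0, Pi.single i 1)

/-- The differential `ℓ₂` of the trimming complex (Remark 2.9). -/
def Tl2 (d2 : F2 →ₗ[R] (F1' × (Fin t → R))) (q1 : ∀ i, F2 →ₗ[R] G1 i)
    (m2 : ∀ i, G2 i →ₗ[R] G1 i) :
    (F2 × (∀ i, G2 i)) → (F1' × (∀ i, G1 i)) :=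
  fun w => ((d2 w.1).1, fun i => - q1 i w.1 + m2 i (w.2 i))

/-- The differential `ℓ₃` of the trimming complex (Remark 2.9). -/
def Tl3 (d3 : F3 →ₗ[R] F2) (q2 : ∀ i, F3 →ₗ[R] G2 i)
    (m3 : ∀ i, G3 i →ₗ[R] G2 i) :
    (F3 × (∀ i, G3 i)) → (F2 × (∀ i, G2 i)) :=
  fun u => (d3 u.1, fun i => q2 i u.1 + m3 i (u.2 i))

/-- The axioms for an associative DG-algebra structure `(t11, t12)` on the length-3
trimming complex `T` (Leibniz rule, graded commutativity, vanishing odd squares,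
associativity). -/
def TrimDGAxioms (d1 : (F1' × (Fin t → R)) →ₗ[R] R)
    (d2 : F2 →ₗ[R] (F1' × (Fin t → R))) (d3 : F3 →ₗ[R] F2)
    (m1 : ∀ i, G1 i →ₗ[R] R) (m2 : ∀ i, G2 i →ₗ[R] G1 i) (m3 : ∀ i, G3 i →ₗ[R] G2 i)
    (q1 : ∀ i, F2 →ₗ[R] G1 i) (q2 : ∀ i, F3 →ₗ[R] G2 i)
    (t11 : (F1' × (∀ i, G1 i)) →ₗ[R] (F1' × (∀ i, G1 i)) →ₗ[R] (F2 × (∀ i, G2 i)))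
    (t12 : (F1' × (∀ i, G1 i)) →ₗ[R] (F2 × (∀ i, G2 i)) →ₗ[R] (F3 × (∀ i, G3 i))) :
    Prop :=
  (∀ z z', Tl2 d2 q1 m2 (t11 z z') = Tl1 d1 m1 z • z' - Tl1 d1 m1 z' • z) ∧
  (∀ z, t11 z z = 0) ∧
  (∀ z z', t11 z z' = - t11 z' z) ∧
  (∀ z w, Tl3 d3 q2 m3 (t12 z w) = Tl1 d1 m1 z • w - t11 z (Tl2 d2 q1 m2 w)) ∧
  (∀ z z' z'', t12 z'' (t11 z z') = t12 z (t11 z' z''))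

/-- The formulas (1)–(9) of Theorem 3.2 for the product on the trimming complex. -/
def TrimDGFormulas [DecidableEq (Fin t)]
    (d1 : (F1' × (Fin t → R)) →ₗ[R] R) (d3 : F3 →ₗ[R] F2)
    (m1 : ∀ i, G1 i →ₗ[R] R) (m2 : ∀ i, G2 i →ₗ[R] G1 i) (m3 : ∀ i, G3 i →ₗ[R] G2 i)
    (q1 : ∀ i, F2 →ₗ[R] G1 i) (q2 : ∀ i, F3 →ₗ[R] G2 i)
    (μ11 : (F1' × (Fin t → R)) →ₗ[R] (F1' × (Fin t → R)) →ₗ[R] F2)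
    (μ12 : (F1' × (Fin t → R)) →ₗ[R] F2 →ₗ[R] F3)
    (γ11 : ∀ i, G1 i →ₗ[R] G1 i →ₗ[R] G2 i)
    (γ12 : ∀ i, G1 i →ₗ[R] G2 i →ₗ[R] G3 i)
    (t11 : (F1' × (∀ i, G1 i)) →ₗ[R] (F1' × (∀ i, G1 i)) →ₗ[R] (F2 × (∀ i, G2 i)))
    (t12 : (F1' × (∀ i, G1 i)) →ₗ[R] (F2 × (∀ i, G2 i)) →ₗ[R] (F3 × (∀ i, G3 i))) :
    Prop :=
  -- (1)  F₁' ⊗ F₁' → F₂ ⊕ (⊕ᵢ G₂ⁱ)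
  (∀ f f' : F1', ∃ g2 : ∀ i, G2 i,
    (∀ i, m2 i (g2 i) = q1 i (μ11 (f, 0) (f', 0))) ∧
    t11 (f, 0) (f', 0) = (μ11 (f, 0) (f', 0), g2)) ∧
  -- (2)  F₁' ⊗ G₁ⁱ → F₂ ⊕ (⊕ⱼ G₂ʲ)
  (∀ (f : F1') (i : Fin t) (g : G1 i), ∃ g2 : ∀ j, G2 j,
    (∀ j, m2 j (g2 j) =
      m1 i g • q1 j (μ11 (0, Pi.single i 1) (f, 0)) + Pi.single i (d1 (f, 0) • g) j) ∧
    t11 (f, 0) (0, Pi.single i g) = (m1 i g • μ11 (0, Pi.single i 1) (f, 0), g2)) ∧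
  -- (3)  G₁ⁱ ⊗ G₁ⁱ → F₂ ⊕ (⊕ⱼ G₂ʲ)
  (∀ (i : Fin t) (g g' : G1 i),
    t11 (0, Pi.single i g) (0, Pi.single i g') =
      (0, Pi.single i (-(d1 (0, Pi.single i 1) • γ11 i g g')))) ∧
  -- (4)  G₁ⁱ ⊗ G₁ʲ → F₂ ⊕ (⊕ₖ G₂ᵏ), i < j
  (∀ (i j : Fin t), i < j → ∀ (g : G1 i) (g' : G1 j), ∃ g2 : ∀ k, G2 k,
    (∀ k, m2 k (g2 k) =
      (m1 i g * m1 j g') • q1 k (μ11 (0, Pi.single i 1) (0, Pi.single j 1)) +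
      Pi.single i ((m1 j g' * d1 (0, Pi.single j 1)) • g) k -
      Pi.single j ((m1 i g * d1 (0, Pi.single i 1)) • g') k) ∧
    t11 (0, Pi.single i g) (0, Pi.single j g') =
      ((m1 i g * m1 j g') • μ11 (0, Pi.single i 1) (0, Pi.single j 1), g2)) ∧
  -- (5)  F₁' ⊗ F₂ → F₃ ⊕ (⊕ᵢ G₃ⁱ)
  (∀ (f : F1') (w : F2), ∃ g3 : ∀ i, G3 i,
    t12 (f, 0) (w, 0) = (μ12 (f, 0) w, g3)) ∧
  -- (6)  F₁' ⊗ G₂ⁱ → F₃ ⊕ (⊕ⱼ G₃ʲ)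
  (∀ (f : F1') (i : Fin t) (c : G2 i), ∃ g3 : ∀ j, G3 j,
    t12 (f, 0) (0, Pi.single i c) = (0, g3)) ∧
  -- (7)  G₁ⁱ ⊗ G₂ⁱ → F₃ ⊕ (⊕ⱼ G₃ʲ)
  (∀ (i : Fin t) (g : G1 i) (c : G2 i),
    t12 (0, Pi.single i g) (0, Pi.single i c) =
      (0, Pi.single i (-(d1 (0, Pi.single i 1) • γ12 i g c)))) ∧
  -- (8)  G₁ⁱ ⊗ G₂ʲ → F₃ ⊕ (⊕ₖ G₃ᵏ), i ≠ j
  (∀ (i j : Fin t), i ≠ j → ∀ (g : G1 i) (c : G2 j), ∃ g3 : ∀ k, G3 k,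
    t12 (0, Pi.single i g) (0, Pi.single j c) = (0, g3)) ∧
  -- (9)  G₁ⁱ ⊗ F₂ → F₃ ⊕ (⊕ⱼ G₃ʲ)
  (∀ (i : Fin t) (g : G1 i) (w : F2), ∃ g3 : ∀ j, G3 j,
    t12 (0, Pi.single i g) (w, 0) = (-(m1 i g) • μ12 (0, Pi.single i 1) w, g3))

end TrimmingSetup

/-!
Let `J`, here `𝔪`, be generated by a regular sequence. Two mechanisms drive the argument.

* The linear part of the Koszul complex is injective modulo `J`: if `d v ∈ J² K` then `v ∈ J K`.
  Since `m₁ ∘ q₁` and `m₂ ∘ q₂` are governed by `d₂` and `d₃`, the Leibniz rule on `F` together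
  with `d₁ F₁ ⊆ J²` puts `m₁ (q₁ (a b))` and then `m₂ (q₂ (a z))` into `J²`.
* The trimming complex maps onto `F` by a chain map which is `(f, g) ↦ (f, -m₁ g)` in degree one and
  a projection in higher degrees. A product on `T` is obtained by multiplying images in `F` and
  correcting the `K₂`-components; every correction term contains a value of `m₁`, of `d₁` or of
  `q₁ (a b)`, all of which vanish modulo `J`. The product `T₁ × T₂ → T₃` is forced, because `ℓ₃` is
  injective, so its reduction is again controlled by injectivity of the linear part.
-/

section SmulTop

variable {R : Type*} [CommRing R] {M N P : Type*} [AddCommGroup M] [Module R M]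
  [AddCommGroup N] [Module R N] [AddCommGroup P] [Module R P] (J : Ideal R)

theorem map_mem_mul_smul_top (I : Ideal R) (f : M →ₗ[R] N) (hf : ∀ y, f y ∈ J • (⊤ : Submodule R N))
    {y : M} (hy : y ∈ I • (⊤ : Submodule R M)) : f y ∈ (I * J) • (⊤ : Submodule R N) := by
  refine Submodule.smul_induction_on hy (fun r hr n _ => ?_) (fun a b ha hb => ?_)
  · rw [map_smul, Submodule.mul_smul]
    exact Submodule.smul_mem_smul hr (hf n)
  · rw [map_add]
    exact add_mem ha hb

theorem map_mem_smul_top (f : M →ₗ[R] N) {y : M} (hy : y ∈ J • (⊤ : Submodule R M)) :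
    f y ∈ J • (⊤ : Submodule R N) :=
  Submodule.smul_top_le_comap_smul_top J f hy

theorem map_mem_sq_smul_top (f : M →ₗ[R] N) (hf : ∀ y, f y ∈ J • (⊤ : Submodule R N))
    {y : M} (hy : y ∈ J • (⊤ : Submodule R M)) : f y ∈ J ^ 2 • (⊤ : Submodule R N) := by
  rw [sq]
  exact map_mem_mul_smul_top J J f hf hy

theorem map₂_mem_sq_smul_top (B : M →ₗ[R] N →ₗ[R] P) {a : M} {b : N}
    (ha : a ∈ J • (⊤ : Submodule R M)) (hb : b ∈ J • (⊤ : Submodule R N)) :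
    B a b ∈ J ^ 2 • (⊤ : Submodule R P) :=
  map_mem_sq_smul_top J (B.flip b) (fun y => map_mem_smul_top J (B y) hb) ha

theorem mem_pi_smul_top_iff {ι : Type*} [Finite ι] {A : ι → Type*} [∀ i, AddCommGroup (A i)]
    [∀ i, Module R (A i)] {y : ∀ i, A i} :
    y ∈ J • (⊤ : Submodule R (∀ i, A i)) ↔ ∀ i, y i ∈ J • (⊤ : Submodule R (A i)) := by
  classical
  have := Fintype.ofFinite ι
  refine ⟨fun h i => map_mem_smul_top J (LinearMap.proj i) h, fun h => ?_⟩
  rw [← Finset.univ_sum_single y]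
  exact sum_mem fun i _ => map_mem_smul_top J (LinearMap.single R A i) (h i)

theorem mem_fun_smul_top_iff {ι : Type*} [Finite ι] {y : ι → R} :
    y ∈ J • (⊤ : Submodule R (ι → R)) ↔ ∀ i, y i ∈ J := by
  simp only [mem_pi_smul_top_iff, smul_eq_mul, Ideal.mul_top]

theorem mem_prod_smul_top {y : M × N} (h₁ : y.1 ∈ J • (⊤ : Submodule R M))
    (h₂ : y.2 ∈ J • (⊤ : Submodule R N)) : y ∈ J • (⊤ : Submodule R (M × N)) := by
  rw [← Prod.fst_add_snd y]
  exact add_mem (map_mem_smul_top J (LinearMap.inl R M N) h₁)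
    (map_mem_smul_top J (LinearMap.inr R M N) h₂)

/-- The map `f` sends `M` into `J N`, and the induced map `M / J M → J N / J² N`, its linear part,
is injective. -/
structure HasInjectiveLinearPart (f : M →ₗ[R] N) : Prop where
  map_mem : ∀ v, f v ∈ J • (⊤ : Submodule R N)
  mem_of_map_mem_sq : ∀ {v}, f v ∈ J ^ 2 • (⊤ : Submodule R N) → v ∈ J • (⊤ : Submodule R M)

end SmulTop

theorem exists_isAlt_lift {R M P Q : Type*} [CommRing R] [AddCommGroup M] [Module R M]
    [Module.Free R M] [AddCommGroup P] [Module R P] [AddCommGroup Q] [Module R Q]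
    (s : Q →ₗ[R] P) (B : M →ₗ[R] M →ₗ[R] P) (hB : B.IsAlt)
    (hs : ∀ a b, B a b ∈ LinearMap.range s) :
    ∃ T : M →ₗ[R] M →ₗ[R] Q, T.IsAlt ∧ ∀ a b, s (T a b) = B a b := by
  classical
  choose c hc using hs
  let b := Module.Free.chooseBasis R M
  let _ : LinearOrder (Module.Free.ChooseBasisIndex R M) :=
    IsWellOrder.linearOrder WellOrderingRel
  -- Antisymmetrizing a lift of the strictly upper triangular part of `B` makes the lift alternating
  -- without dividing by `2`.
  let U : M →ₗ[R] M →ₗ[R] Q :=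
    b.constr R fun i => b.constr R fun j => if i < j then c (b i) (b j) else 0
  have hU (i j) : U (b i) (b j) = if i < j then c (b i) (b j) else 0 := by
    simp only [U, Module.Basis.constr_basis]
  have hlift : (U - U.flip).compr₂ s = B := by
    refine b.ext fun i => b.ext fun j => ?_
    simp only [LinearMap.compr₂_apply, LinearMap.sub_apply, LinearMap.flip_apply, hU]
    rcases lt_trichotomy i j with h | rfl | h
    · simp [h, h.not_gt, hc]
    · simp [hB.self_eq_zero]
    · simp [h, h.not_gt, hc, hB.neg]
  refine ⟨U - U.flip, fun a => sub_self _, fun a b => ?_⟩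
  rw [← hlift, LinearMap.compr₂_apply]

/-- A length-three DG-algebra resolution `0 → A₃ → A₂ → A₁ → R` of `R / d₁ A₁`, with
products `A₁ × A₁ → A₂` and `A₁ × A₂ → A₃`. The remaining products are determined by graded
commutativity, and associativity is `DGResolution.mul₁₂_assoc`. -/
structure DGResolution (R : Type*) [CommRing R] (A₁ A₂ A₃ : Type*) [AddCommGroup A₁] [Module R A₁]
    [AddCommGroup A₂] [Module R A₂] [AddCommGroup A₃] [Module R A₃] where
  d₁ : A₁ →ₗ[R] R
  d₂ : A₂ →ₗ[R] A₁
  d₃ : A₃ →ₗ[R] A₂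
  mul₁₁ : A₁ →ₗ[R] A₁ →ₗ[R] A₂
  mul₁₂ : A₁ →ₗ[R] A₂ →ₗ[R] A₃
  exact₁ : Function.Exact d₂ d₁
  exact₂ : Function.Exact d₃ d₂
  injective₃ : Function.Injective d₃
  isAlt : mul₁₁.IsAlt
  leibniz₁₁ : ∀ a b, d₂ (mul₁₁ a b) = d₁ a • b - d₁ b • a
  leibniz₁₂ : ∀ a z, d₃ (mul₁₂ a z) = d₁ a • z - mul₁₁ a (d₂ z)

namespace DGResolution

variable {R A₁ A₂ A₃ : Type*} [CommRing R] [AddCommGroup A₁] [Module R A₁] [AddCommGroup A₂]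
  [Module R A₂] [AddCommGroup A₃] [Module R A₃]

theorem mul₁₁_comm (A : DGResolution R A₁ A₂ A₃) (a b : A₁) : A.mul₁₁ a b = -A.mul₁₁ b a :=
  (A.isAlt.neg b a).symm

theorem mul₁₂_assoc (A : DGResolution R A₁ A₂ A₃) (a b c : A₁) :
    A.mul₁₂ c (A.mul₁₁ a b) = A.mul₁₂ a (A.mul₁₁ b c) := by
  apply A.injective₃
  simp only [A.leibniz₁₂, A.leibniz₁₁, map_sub, map_smul]
  rw [A.mul₁₁_comm c b, A.mul₁₁_comm c a]
  module

/-- In a length-three resolution, an alternating product `A₁ × A₁ → A₂` satisfying the Leibniz rule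
extends to a DG-algebra structure: the product `A₁ × A₂ → A₃` is read off through the injection
`d₃` from the Leibniz rule. -/
noncomputable def ofMul₁₁ (d₁ : A₁ →ₗ[R] R) (d₂ : A₂ →ₗ[R] A₁) (d₃ : A₃ →ₗ[R] A₂)
    (mul₁₁ : A₁ →ₗ[R] A₁ →ₗ[R] A₂) (exact₁ : Function.Exact d₂ d₁) (exact₂ : Function.Exact d₃ d₂)
    (injective₃ : Function.Injective d₃) (isAlt : mul₁₁.IsAlt)
    (leibniz₁₁ : ∀ a b, d₂ (mul₁₁ a b) = d₁ a • b - d₁ b • a) : DGResolution R A₁ A₂ A₃ where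
  d₁ := d₁
  d₂ := d₂
  d₃ := d₃
  mul₁₁ := mul₁₁
  mul₁₂ := LinearMap.codRestrict₂ ((LinearMap.lsmul R A₂).comp d₁ - mul₁₁.compl₂ d₂) d₃ injective₃
    fun a z => by
      have hz : d₂ (d₁ a • z - mul₁₁ a (d₂ z)) = 0 := by
        rw [map_sub, map_smul, leibniz₁₁, exact₁.apply_apply_eq_zero, zero_smul, sub_zero, sub_self]
      exact (exact₂ _).1 hz
  exact₁ := exact₁
  exact₂ := exact₂
  injective₃ := injective₃
  isAlt := isAlt
  leibniz₁₁ := leibniz₁₁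
  leibniz₁₂ a z := LinearMap.codRestrict₂_apply _ _ _ _ a z

end DGResolution

section Koszul

variable {R : Type*} [CommRing R]

theorem mem_ofList_take_of_mul_mem {rs : List R} (h : RingTheory.Sequence.IsWeaklyRegular R rs)
    (i : Fin rs.length) {a : R} (ha : rs[i] * a ∈ Ideal.ofList (rs.take i)) :
    a ∈ Ideal.ofList (rs.take i) := by
  have hi := (RingTheory.Sequence.isWeaklyRegular_iff_Fin R rs).1 h i
  rw [isSMulRegular_iff_right_eq_zero_of_smul] at hi
  have := hi (Submodule.Quotient.mk a) <| by
    rw [← Submodule.Quotient.mk_smul, Submodule.Quotient.mk_eq_zero]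
    simpa using ha
  rw [Submodule.Quotient.mk_eq_zero] at this
  simpa using this

/-- The given maps are the Koszul complex on `x 0, x 1, x 2` with its exterior product. In terms of
the usual basis `e₀, e₁, e₂` of `K₁`, the coordinates are those with respect to the bases
`e₁ ∧ e₂, e₀ ∧ e₂, e₀ ∧ e₁` of `K₂` and `e₀ ∧ e₁ ∧ e₂` of `K₃`. -/
structure IsKoszulComplex (x : Fin 3 → R) (d₁ : (Fin 3 → R) →ₗ[R] R)
    (d₂ : (Fin 3 → R) →ₗ[R] (Fin 3 → R)) (d₃ : R →ₗ[R] (Fin 3 → R))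
    (mul₁₁ : (Fin 3 → R) →ₗ[R] (Fin 3 → R) →ₗ[R] (Fin 3 → R))
    (mul₁₂ : (Fin 3 → R) →ₗ[R] (Fin 3 → R) →ₗ[R] R) : Prop where
  d₁_apply : ∀ v, d₁ v = v 0 * x 0 + v 1 * x 1 + v 2 * x 2
  d₂_apply : ∀ w, d₂ w = fun l =>
    if l = 0 then -(x 2 * w 1) - x 1 * w 2
    else if l = 1 then -(x 2 * w 0) + x 0 * w 2
    else x 1 * w 0 + x 0 * w 1
  d₃_apply : ∀ r : R, d₃ r = fun l =>
    if l = 0 then r * x 0 else if l = 1 then -(r * x 1) else r * x 2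
  mul₁₁_apply : ∀ v w, mul₁₁ v w = fun l =>
    if l = 0 then v 1 * w 2 - v 2 * w 1
    else if l = 1 then v 0 * w 2 - v 2 * w 0
    else v 0 * w 1 - v 1 * w 0
  mul₁₂_apply : ∀ v w, mul₁₂ v w = v 0 * w 0 - v 1 * w 1 + v 2 * w 2

theorem mem_of_mul_mem_of_isWeaklyRegular_triple {a b c : R}
    (h : RingTheory.Sequence.IsWeaklyRegular R [a, b, c]) :
    (∀ y, a * y = 0 → y = 0) ∧
    (∀ y, b * y ∈ Ideal.span {a} → y ∈ Ideal.span {a}) ∧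
    (∀ y, c * y ∈ Ideal.span {a, b} → y ∈ Ideal.span {a, b}) := by
  have key {n : ℕ} (hn : n < [a, b, c].length) (y : R) :=
    mem_ofList_take_of_mul_mem h ⟨n, hn⟩ (a := y)
  refine ⟨fun y => ?_, fun y => ?_, fun y => ?_⟩
  · simpa using key (n := 0) (by simp) y
  · simpa using key (n := 1) (by simp) y
  · simpa [Ideal.span_insert] using key (n := 2) (by simp) y

theorem apply_mem_of_span_eq {x : Fin 3 → R} {J : Ideal R}
    (hJ : Ideal.span {x 0, x 1, x 2} = J) (l : Fin 3) : x l ∈ J := by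
  rw [← hJ]
  exact Ideal.subset_span (by fin_cases l <;> simp)

namespace IsKoszulComplex

variable {x : Fin 3 → R} {d₁ : (Fin 3 → R) →ₗ[R] R} {d₂ : (Fin 3 → R) →ₗ[R] (Fin 3 → R)}
  {d₃ : R →ₗ[R] (Fin 3 → R)} {mul₁₁ : (Fin 3 → R) →ₗ[R] (Fin 3 → R) →ₗ[R] (Fin 3 → R)}
  {mul₁₂ : (Fin 3 → R) →ₗ[R] (Fin 3 → R) →ₗ[R] R}

theorem exact₁ (K : IsKoszulComplex x d₁ d₂ d₃ mul₁₁ mul₁₂)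
    (hx : RingTheory.Sequence.IsWeaklyRegular R [x 0, x 1, x 2]) : Function.Exact d₂ d₁ := by
  obtain ⟨reg₀, reg₁, reg₂⟩ := mem_of_mul_mem_of_isWeaklyRegular_triple hx
  refine fun v => ⟨fun hv => ?_, ?_⟩
  · rw [K.d₁_apply] at hv
    obtain ⟨a, b, hab⟩ := Ideal.mem_span_pair.1 <| reg₂ (v 2) <|
      Ideal.mem_span_pair.2 ⟨-v 0, -v 1, by linear_combination -hv⟩
    rw [← hab] at hv
    obtain ⟨c, hc⟩ := Ideal.mem_span_singleton'.1 <| reg₁ (v 1 + b * x 2) <|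
      Ideal.mem_span_singleton'.2 ⟨-v 0 - a * x 2, by linear_combination -hv⟩
    have h₀ := reg₀ (v 0 + a * x 2 + c * x 1) (by linear_combination hv + x 1 * hc)
    refine ⟨![b, a, c], ?_⟩
    rw [K.d₂_apply]
    ext l
    fin_cases l
    · change -(x 2 * a) - x 1 * c = v 0
      linear_combination -h₀
    · change -(x 2 * b) + x 0 * c = v 1
      linear_combination hc
    · change x 1 * b + x 0 * a = v 2
      linear_combination hab
  · rintro ⟨w, rfl⟩
    rw [K.d₁_apply, K.d₂_apply]
    dsimp
    ring

theorem exact₂ (K : IsKoszulComplex x d₁ d₂ d₃ mul₁₁ mul₁₂)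
    (hx : RingTheory.Sequence.IsWeaklyRegular R [x 0, x 1, x 2]) : Function.Exact d₃ d₂ := by
  obtain ⟨reg₀, reg₁, -⟩ := mem_of_mul_mem_of_isWeaklyRegular_triple hx
  refine fun w => ⟨fun hw => ?_, ?_⟩
  · rw [K.d₂_apply] at hw
    have hw₁ : -(x 2 * w 0) + x 0 * w 2 = 0 := congrFun hw 1
    have hw₂ : x 1 * w 0 + x 0 * w 1 = 0 := congrFun hw 2
    obtain ⟨r, hr⟩ := Ideal.mem_span_singleton'.1 <| reg₁ (w 0) <|
      Ideal.mem_span_singleton'.2 ⟨-w 1, by linear_combination -hw₂⟩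
    have h₁ := reg₀ (x 1 * r + w 1) (by linear_combination hw₂ + x 1 * hr)
    have h₂ := reg₀ (w 2 - x 2 * r) (by linear_combination hw₁ - x 2 * hr)
    refine ⟨r, ?_⟩
    rw [K.d₃_apply]
    ext l
    fin_cases l
    · exact hr
    · change -(r * x 1) = w 1
      linear_combination -h₁
    · change r * x 2 = w 2
      linear_combination -h₂
  · rintro ⟨r, rfl⟩
    rw [K.d₂_apply, K.d₃_apply]
    ext l
    fin_cases l <;> dsimp <;> ring

theorem injective₃ (K : IsKoszulComplex x d₁ d₂ d₃ mul₁₁ mul₁₂)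
    (hx : RingTheory.Sequence.IsWeaklyRegular R [x 0, x 1, x 2]) : Function.Injective d₃ := by
  rw [injective_iff_map_eq_zero]
  intro r hr
  have hr₀ : r * x 0 = 0 := by simpa [K.d₃_apply] using congrFun hr 0
  exact (mem_of_mul_mem_of_isWeaklyRegular_triple hx).1 r (by rw [mul_comm, hr₀])

/-- The Koszul complex on a regular sequence as a DG-algebra resolution. -/
def dgResolution (K : IsKoszulComplex x d₁ d₂ d₃ mul₁₁ mul₁₂)
    (hx : RingTheory.Sequence.IsWeaklyRegular R [x 0, x 1, x 2]) :
    DGResolution R (Fin 3 → R) (Fin 3 → R) R where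
  d₁ := d₁
  d₂ := d₂
  d₃ := d₃
  mul₁₁ := mul₁₁
  mul₁₂ := mul₁₂
  exact₁ := K.exact₁ hx
  exact₂ := K.exact₂ hx
  injective₃ := K.injective₃ hx
  isAlt v := by
    rw [K.mul₁₁_apply]
    ext l
    fin_cases l <;> dsimp <;> ring
  leibniz₁₁ v w := by
    rw [K.d₂_apply, K.mul₁₁_apply, K.d₁_apply, K.d₁_apply]
    ext l
    fin_cases l <;> dsimp <;> ring
  leibniz₁₂ v w := by
    rw [K.d₃_apply, K.mul₁₂_apply, K.d₁_apply, K.mul₁₁_apply, K.d₂_apply]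
    ext l
    fin_cases l <;> dsimp <;> ring

variable {J : Ideal R}

theorem exists_mem_smul_top_d₁_eq (K : IsKoszulComplex x d₁ d₂ d₃ mul₁₁ mul₁₂)
    (hJ : Ideal.span {x 0, x 1, x 2} = J) {I : Ideal R} {y : R} (hy : y ∈ I * J) :
    ∃ a ∈ I • (⊤ : Submodule R (Fin 3 → R)), d₁ a = y := by
  refine Submodule.mul_induction_on hy ?_ ?_
  · intro r hr s hs
    rw [← hJ, Ideal.mem_span_insert] at hs
    obtain ⟨a, z, hz, rfl⟩ := hs
    obtain ⟨b, c, rfl⟩ := Ideal.mem_span_pair.1 hz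
    refine ⟨r • ![a, b, c], Submodule.smul_mem_smul hr trivial, ?_⟩
    rw [K.d₁_apply]
    dsimp
    ring
  · rintro _ _ ⟨a, ha, rfl⟩ ⟨b, hb, rfl⟩
    exact ⟨a + b, add_mem ha hb, map_add _ _ _⟩

theorem d₂_mem_smul_top (K : IsKoszulComplex x d₁ d₂ d₃ mul₁₁ mul₁₂)
    (hJ : Ideal.span {x 0, x 1, x 2} = J) (w : Fin 3 → R) :
    d₂ w ∈ J • (⊤ : Submodule R (Fin 3 → R)) := by
  have hmem (l k) : x l * w k ∈ J := Ideal.mul_mem_right _ _ (apply_mem_of_span_eq hJ l)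
  rw [K.d₂_apply, mem_fun_smul_top_iff]
  intro l
  fin_cases l
  · exact sub_mem (neg_mem (hmem 2 1)) (hmem 1 2)
  · exact add_mem (neg_mem (hmem 2 0)) (hmem 0 2)
  · exact add_mem (hmem 1 0) (hmem 0 1)

theorem hasInjectiveLinearPart_d₁ (K : IsKoszulComplex x d₁ d₂ d₃ mul₁₁ mul₁₂)
    (hx : RingTheory.Sequence.IsWeaklyRegular R [x 0, x 1, x 2])
    (hJ : Ideal.span {x 0, x 1, x 2} = J) : HasInjectiveLinearPart J d₁ where
  map_mem v := by
    rw [K.d₁_apply, smul_eq_mul, Ideal.mul_top]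
    have hmem (l) : v l * x l ∈ J := Ideal.mul_mem_left _ _ (apply_mem_of_span_eq hJ l)
    exact add_mem (add_mem (hmem 0) (hmem 1)) (hmem 2)
  mem_of_map_mem_sq {v} hv := by
    rw [smul_eq_mul, Ideal.mul_top, sq] at hv
    obtain ⟨a, ha, hav⟩ := K.exists_mem_smul_top_d₁_eq hJ hv
    obtain ⟨w, hw⟩ := (K.exact₁ hx (v - a)).1 (by rw [map_sub, hav, sub_self])
    rw [← sub_add_cancel v a, ← hw]
    exact add_mem (K.d₂_mem_smul_top hJ w) ha

theorem hasInjectiveLinearPart_d₂ (K : IsKoszulComplex x d₁ d₂ d₃ mul₁₁ mul₁₂)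
    (hx : RingTheory.Sequence.IsWeaklyRegular R [x 0, x 1, x 2])
    (hJ : Ideal.span {x 0, x 1, x 2} = J) : HasInjectiveLinearPart J d₂ where
  map_mem := K.d₂_mem_smul_top hJ
  mem_of_map_mem_sq {w} hw := by
    -- Up to sign, each coordinate of `d₂ w` is `d₁` of a vector of coordinates of `w`.
    rw [mem_fun_smul_top_iff, K.d₂_apply] at hw
    have h₀ : ![0, w 2, w 1] ∈ J • (⊤ : Submodule R (Fin 3 → R)) := by
      refine (K.hasInjectiveLinearPart_d₁ hx hJ).mem_of_map_mem_sq ?_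
      rw [K.d₁_apply, smul_eq_mul, Ideal.mul_top]
      convert neg_mem (hw 0) using 1
      dsimp
      ring
    have h₂ : ![w 1, w 0, 0] ∈ J • (⊤ : Submodule R (Fin 3 → R)) := by
      refine (K.hasInjectiveLinearPart_d₁ hx hJ).mem_of_map_mem_sq ?_
      rw [K.d₁_apply, smul_eq_mul, Ideal.mul_top]
      convert hw 2 using 1
      dsimp
      ring
    rw [mem_fun_smul_top_iff] at h₀ h₂ ⊢
    intro l
    fin_cases l
    · exact h₂ 1
    · exact h₂ 0
    · exact h₀ 1

theorem hasInjectiveLinearPart_d₃ (K : IsKoszulComplex x d₁ d₂ d₃ mul₁₁ mul₁₂)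
    (hx : RingTheory.Sequence.IsWeaklyRegular R [x 0, x 1, x 2])
    (hJ : Ideal.span {x 0, x 1, x 2} = J) : HasInjectiveLinearPart J d₃ where
  map_mem r := by
    have hmem (l) : r * x l ∈ J := Ideal.mul_mem_left _ _ (apply_mem_of_span_eq hJ l)
    rw [K.d₃_apply, mem_fun_smul_top_iff]
    intro l
    fin_cases l
    · exact hmem 0
    · exact neg_mem (hmem 1)
    · exact hmem 2
  mem_of_map_mem_sq {r} hr := by
    rw [mem_fun_smul_top_iff, K.d₃_apply] at hr
    have h : ![r, 0, 0] ∈ J • (⊤ : Submodule R (Fin 3 → R)) := by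
      refine (K.hasInjectiveLinearPart_d₁ hx hJ).mem_of_map_mem_sq ?_
      rw [K.d₁_apply, smul_eq_mul, Ideal.mul_top]
      simpa using hr 0
    rw [smul_eq_mul, Ideal.mul_top]
    exact (mem_fun_smul_top_iff J).1 h 0

end IsKoszulComplex

end Koszul

section Trimming

variable {R : Type u} [CommRing R] {t : ℕ} {F₁ F₂ F₃ : Type u}
  [AddCommGroup F₁] [Module R F₁] [AddCommGroup F₂] [Module R F₂] [AddCommGroup F₃] [Module R F₃]
  {G₁ G₂ G₃ : Fin t → Type u}
  [∀ i, AddCommGroup (G₁ i)] [∀ i, Module R (G₁ i)] [∀ i, AddCommGroup (G₂ i)]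
  [∀ i, Module R (G₂ i)] [∀ i, AddCommGroup (G₃ i)] [∀ i, Module R (G₃ i)]

/-- The comparison maps `q₁ i : F₂ → G₁ i` and `q₂ i : F₃ → G₂ i` which lift the `i`-th trimmed
coordinate of `d₂` and define the trimming complex of `F` along the resolutions `K i`. -/
structure TrimmingMaps (F : DGResolution R (F₁ × (Fin t → R)) F₂ F₃)
    (K : ∀ i, DGResolution R (G₁ i) (G₂ i) (G₃ i)) where
  q₁ : ∀ i, F₂ →ₗ[R] G₁ i
  q₂ : ∀ i, F₃ →ₗ[R] G₂ i
  d₁_q₁ : ∀ i w, (K i).d₁ (q₁ i w) = (F.d₂ w).2 i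
  d₂_q₂ : ∀ i u, (K i).d₂ (q₂ i u) = q₁ i (F.d₃ u)

namespace TrimmingMaps

variable {F : DGResolution R (F₁ × (Fin t → R)) F₂ F₃}
  {K : ∀ i, DGResolution R (G₁ i) (G₂ i) (G₃ i)} (Q : TrimmingMaps F K) {J : Ideal R}

theorem q₁_mul₁₁_mem (hF₁ : ∀ a, F.d₁ a ∈ J ^ 2) {i : Fin t}
    (hK₁ : HasInjectiveLinearPart J (K i).d₁) (a b : F₁ × (Fin t → R)) :
    Q.q₁ i (F.mul₁₁ a b) ∈ J • (⊤ : Submodule R (G₁ i)) := by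
  refine hK₁.mem_of_map_mem_sq ?_
  rw [Q.d₁_q₁, F.leibniz₁₁, smul_eq_mul, Ideal.mul_top]
  exact sub_mem (Ideal.mul_mem_right _ _ (hF₁ a)) (Ideal.mul_mem_right _ _ (hF₁ b))

theorem q₂_mul₁₂_mem (hF₁ : ∀ a, F.d₁ a ∈ J ^ 2)
    (hF₂ : ∀ w, F.d₂ w ∈ J • (⊤ : Submodule R (F₁ × (Fin t → R)))) {i : Fin t}
    (hK₁ : HasInjectiveLinearPart J (K i).d₁) (hK₂ : HasInjectiveLinearPart J (K i).d₂)
    (a : F₁ × (Fin t → R)) (w : F₂) :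
    Q.q₂ i (F.mul₁₂ a w) ∈ J • (⊤ : Submodule R (G₂ i)) := by
  refine hK₂.mem_of_map_mem_sq ?_
  rw [Q.d₂_q₂, F.leibniz₁₂, map_sub, map_smul]
  exact sub_mem (Submodule.smul_mem_smul (hF₁ a) trivial) <|
    map_mem_sq_smul_top J (Q.q₁ i ∘ₗ F.mul₁₁ a) (Q.q₁_mul₁₁_mem hF₁ hK₁ a) (hF₂ w)

/-- The degree-one component `(f, g) ↦ (f, -m₁ g)` of the chain map from the trimming complex to
`F`; its components of degrees two and three are the projections onto `F₂` and `F₃`. -/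
def toF₁ (_ : TrimmingMaps F K) : (F₁ × ∀ i, G₁ i) →ₗ[R] F₁ × (Fin t → R) :=
  LinearMap.id.prodMap (LinearMap.pi fun i => -((K i).d₁ ∘ₗ LinearMap.proj i))

@[simp]
theorem toF₁_fst (z : F₁ × ∀ i, G₁ i) : (Q.toF₁ z).1 = z.1 := rfl

@[simp]
theorem toF₁_snd_apply (z : F₁ × ∀ i, G₁ i) (i : Fin t) : (Q.toF₁ z).2 i = -(K i).d₁ (z.2 i) := rfl

theorem toF₁_inl (f : F₁) : Q.toF₁ (f, 0) = (f, 0) := by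
  ext <;> simp

theorem toF₁_single (i : Fin t) (g : G₁ i) :
    Q.toF₁ (0, Pi.single i g) = -(K i).d₁ g • (0, Pi.single i 1) := by
  ext j
  · simp
  · obtain rfl | h := eq_or_ne j i <;> simp [*]

theorem toF₁_inr_mem (hK₁ : ∀ i, HasInjectiveLinearPart J (K i).d₁) (g : ∀ i, G₁ i) :
    Q.toF₁ (0, g) ∈ J • (⊤ : Submodule R (F₁ × (Fin t → R))) := by
  refine mem_prod_smul_top J (zero_mem _) ((mem_pi_smul_top_iff J).2 fun i => ?_)
  exact neg_mem ((hK₁ i).map_mem (g i))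

/-- The differential `ℓ₁` of the trimming complex, as a linear map. -/
def d₁ : (F₁ × ∀ i, G₁ i) →ₗ[R] R :=
  F.d₁ ∘ₗ Q.toF₁

/-- The differential `ℓ₂` of the trimming complex, as a linear map. -/
def d₂ : (F₂ × ∀ i, G₂ i) →ₗ[R] F₁ × ∀ i, G₁ i :=
  (LinearMap.fst R F₁ (Fin t → R) ∘ₗ F.d₂ ∘ₗ LinearMap.fst R F₂ _).prod <|
    LinearMap.pi fun i => -(Q.q₁ i) ∘ₗ LinearMap.fst R F₂ _ +
      (K i).d₂ ∘ₗ LinearMap.proj i ∘ₗ LinearMap.snd R F₂ _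

/-- The differential `ℓ₃` of the trimming complex, as a linear map. -/
def d₃ : (F₃ × ∀ i, G₃ i) →ₗ[R] F₂ × ∀ i, G₂ i :=
  (F.d₃ ∘ₗ LinearMap.fst R F₃ _).prod <|
    LinearMap.pi fun i => Q.q₂ i ∘ₗ LinearMap.fst R F₃ _ +
      (K i).d₃ ∘ₗ LinearMap.proj i ∘ₗ LinearMap.snd R F₃ _

theorem Tl1_eq (z : F₁ × ∀ i, G₁ i) : Tl1 F.d₁ (fun i => (K i).d₁) z = Q.d₁ z := by
  have hz : Q.toF₁ z = (z.1, 0) + ∑ i, -(K i).d₁ (z.2 i) • ((0 : F₁), Pi.single i (1 : R)) := by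
    ext j
    · simp [Prod.fst_sum]
    · simp [Prod.snd_sum, Finset.sum_apply, Pi.single_apply]
  simp only [d₁, LinearMap.comp_apply, hz, map_add, map_sum, map_smul]
  simp [Tl1, sub_eq_add_neg]

theorem Tl2_eq (w : F₂ × ∀ i, G₂ i) : Tl2 F.d₂ Q.q₁ (fun i => (K i).d₂) w = Q.d₂ w := rfl

theorem Tl3_eq (u : F₃ × ∀ i, G₃ i) : Tl3 F.d₃ Q.q₂ (fun i => (K i).d₃) u = Q.d₃ u := rfl

theorem d₂_fst (w : F₂ × ∀ i, G₂ i) : (Q.d₂ w).1 = (F.d₂ w.1).1 := rfl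

theorem d₂_snd_apply (w : F₂ × ∀ i, G₂ i) (i : Fin t) :
    (Q.d₂ w).2 i = -Q.q₁ i w.1 + (K i).d₂ (w.2 i) := rfl

theorem d₃_snd_apply (u : F₃ × ∀ i, G₃ i) (i : Fin t) :
    (Q.d₃ u).2 i = Q.q₂ i u.1 + (K i).d₃ (u.2 i) := rfl

theorem toF₁_d₂ (w : F₂ × ∀ i, G₂ i) : Q.toF₁ (Q.d₂ w) = F.d₂ w.1 := by
  ext i
  · rw [toF₁_fst, d₂_fst]
  · simp [d₂_snd_apply, Q.d₁_q₁, (K i).exact₁.apply_apply_eq_zero]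

theorem exact₁ : Function.Exact Q.d₂ Q.d₁ := by
  refine fun z => ⟨fun hz => ?_, ?_⟩
  · obtain ⟨w, hw⟩ := (F.exact₁ (Q.toF₁ z)).1 hz
    have hlift (i) : ∃ c, (K i).d₂ c = z.2 i + Q.q₁ i w :=
      ((K i).exact₁ _).1 (by rw [map_add, Q.d₁_q₁, hw, toF₁_snd_apply, add_neg_cancel])
    choose c hc using hlift
    refine ⟨(w, c), Prod.ext (by rw [d₂_fst, hw, toF₁_fst]) (funext fun i => ?_)⟩
    rw [d₂_snd_apply, hc]
    abel
  · rintro ⟨w, rfl⟩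
    rw [d₁, LinearMap.comp_apply, toF₁_d₂, F.exact₁.apply_apply_eq_zero]

theorem exact₂ : Function.Exact Q.d₃ Q.d₂ := by
  refine fun w => ⟨fun hw => ?_, ?_⟩
  · obtain ⟨u, hu⟩ := (F.exact₂ w.1).1 (by rw [← Q.toF₁_d₂, hw, map_zero])
    have hlift (i) : ∃ r, (K i).d₃ r = w.2 i - Q.q₂ i u := by
      have hwi : -Q.q₁ i w.1 + (K i).d₂ (w.2 i) = 0 := congrFun (congrArg Prod.snd hw) i
      exact ((K i).exact₂ _).1 (by rw [map_sub, Q.d₂_q₂, hu, sub_eq_neg_add, hwi])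
    choose r hr using hlift
    refine ⟨(u, r), Prod.ext hu (funext fun i => ?_)⟩
    rw [d₃_snd_apply, hr]
    abel
  · rintro ⟨u, rfl⟩
    refine Prod.ext ?_ (funext fun i => ?_)
    · rw [d₂_fst]
      exact congrArg Prod.fst (F.exact₂.apply_apply_eq_zero u.1)
    · rw [d₂_snd_apply, d₃_snd_apply, map_add, Q.d₂_q₂, (K i).exact₂.apply_apply_eq_zero, add_zero]
      exact neg_add_cancel _

theorem injective₃ : Function.Injective Q.d₃ := by
  rw [injective_iff_map_eq_zero]
  intro u hu
  have hu₁ : u.1 = 0 := (injective_iff_map_eq_zero F.d₃).1 F.injective₃ _ (congrArg Prod.fst hu)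
  refine Prod.ext hu₁ (funext fun i => (injective_iff_map_eq_zero (K i).d₃).1 (K i).injective₃ _ ?_)
  have hui : (Q.d₃ u).2 i = 0 := by rw [hu]; rfl
  rwa [d₃_snd_apply, hu₁, map_zero, zero_add] at hui

/-- The basis vector `e₀ʲ` of `F₁` corresponding to the `j`-th trimmed generator. -/
abbrev gen (j : Fin t) : F₁ × (Fin t → R) := (0, Pi.single j 1)

/-- The projection of `F₁` killing the basis vector `e₀ʲ`. -/
def dropGen (j : Fin t) : (F₁ × (Fin t → R)) →ₗ[R] F₁ × (Fin t → R) :=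
  LinearMap.id - (LinearMap.proj j ∘ₗ LinearMap.snd R F₁ (Fin t → R)).smulRight (gen j)

theorem dropGen_apply (j : Fin t) (a : F₁ × (Fin t → R)) : dropGen j a = a - a.2 j • gen j := rfl

theorem dropGen_snd_apply (j : Fin t) (a : F₁ × (Fin t → R)) : (dropGen j a).2 j = 0 := by
  simp [dropGen_apply]

-- After killing `e₀ʲ`, `q₁ʲ (a b)` is a cycle, since `m₁` sends it to the `j`-th coordinate of
-- `d₁ a • b - d₁ b • a`.
theorem exists_cycleLift [Module.Free R F₁] (j : Fin t) :
    ∃ L : (F₁ × (Fin t → R)) →ₗ[R] (F₁ × (Fin t → R)) →ₗ[R] G₂ j, L.IsAlt ∧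
      ∀ a b, (K j).d₂ (L a b) = Q.q₁ j (F.mul₁₁ (dropGen j a) (dropGen j b)) := by
  refine exists_isAlt_lift (K j).d₂ ((F.mul₁₁.compl₁₂ (dropGen j) (dropGen j)).compr₂ (Q.q₁ j))
    (fun a => ?_) (fun a b => ((K j).exact₁ _).1 ?_)
  · simp [F.isAlt.self_eq_zero]
  · simp [Q.d₁_q₁, F.leibniz₁₁, dropGen_snd_apply]

/-- An alternating lift through `m₂ : G₂ʲ → G₁ʲ` of the form `(a, b) ↦ q₁ʲ (a b)` on the elements
without `e₀ʲ`-component. -/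
noncomputable def cycleLift [Module.Free R F₁] (j : Fin t) :
    (F₁ × (Fin t → R)) →ₗ[R] (F₁ × (Fin t → R)) →ₗ[R] G₂ j :=
  (Q.exists_cycleLift j).choose

theorem cycleLift_isAlt [Module.Free R F₁] (j : Fin t) : (Q.cycleLift j).IsAlt :=
  (Q.exists_cycleLift j).choose_spec.1

/-- The map `a ↦ q₁ʲ (a e₀ʲ)`. -/
def q₁MulGen (j : Fin t) : (F₁ × (Fin t → R)) →ₗ[R] G₁ j :=
  Q.q₁ j ∘ₗ F.mul₁₁.flip (gen j)

theorem q₁MulGen_apply (j : Fin t) (a : F₁ × (Fin t → R)) :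
    Q.q₁MulGen j a = Q.q₁ j (F.mul₁₁ a (gen j)) := rfl

theorem d₁_q₁MulGen (j : Fin t) (a : F₁ × (Fin t → R)) :
    (K j).d₁ (Q.q₁MulGen j a) = F.d₁ a - F.d₁ (gen j) * a.2 j := by
  simp [q₁MulGen_apply, Q.d₁_q₁, F.leibniz₁₁]

theorem d₂_cycleLift [Module.Free R F₁] (j : Fin t) (a b : F₁ × (Fin t → R)) :
    (K j).d₂ (Q.cycleLift j a b) =
      Q.q₁ j (F.mul₁₁ a b) - b.2 j • Q.q₁MulGen j a + a.2 j • Q.q₁MulGen j b := by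
  rw [cycleLift, (Q.exists_cycleLift j).choose_spec.2]
  simp only [dropGen_apply, map_sub, map_smul, LinearMap.sub_apply, LinearMap.smul_apply,
    F.isAlt.self_eq_zero, q₁MulGen_apply, F.mul₁₁_comm (gen j) b, map_neg, map_zero]
  module

/-- The form `(z, z') ↦ q₁ʲ (z e₀ʲ) · z'ⱼ` with values in `G₂ʲ`. -/
def genForm (j : Fin t) : (F₁ × ∀ i, G₁ i) →ₗ[R] (F₁ × ∀ i, G₁ i) →ₗ[R] G₂ j :=
  (K j).mul₁₁.compl₁₂ (Q.q₁MulGen j ∘ₗ Q.toF₁) (LinearMap.proj j ∘ₗ LinearMap.snd R F₁ _)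

theorem genForm_apply (j : Fin t) (z z' : F₁ × ∀ i, G₁ i) :
    Q.genForm j z z' = (K j).mul₁₁ (Q.q₁MulGen j (Q.toF₁ z)) (z'.2 j) := rfl

/-- The `G₂ʲ`-component of the product `T₁ × T₁ → T₂` of the trimming complex. -/
noncomputable def G₂Mul [Module.Free R F₁] (j : Fin t) :
    (F₁ × ∀ i, G₁ i) →ₗ[R] (F₁ × ∀ i, G₁ i) →ₗ[R] G₂ j :=
  (Q.cycleLift j).compl₁₂ Q.toF₁ Q.toF₁ + (Q.genForm j - (Q.genForm j).flip) -
    F.d₁ (gen j) • (K j).mul₁₁.compl₁₂ (LinearMap.proj j ∘ₗ LinearMap.snd R F₁ _)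
      (LinearMap.proj j ∘ₗ LinearMap.snd R F₁ _)

theorem G₂Mul_apply [Module.Free R F₁] (j : Fin t) (z z' : F₁ × ∀ i, G₁ i) :
    Q.G₂Mul j z z' = Q.cycleLift j (Q.toF₁ z) (Q.toF₁ z') + (Q.genForm j z z' - Q.genForm j z' z) -
      F.d₁ (gen j) • (K j).mul₁₁ (z.2 j) (z'.2 j) := rfl

theorem G₂Mul_isAlt [Module.Free R F₁] (j : Fin t) : (Q.G₂Mul j).IsAlt := fun z => by
  rw [G₂Mul_apply, (Q.cycleLift_isAlt j).self_eq_zero, (K j).isAlt.self_eq_zero]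
  simp

theorem d₂_G₂Mul [Module.Free R F₁] (j : Fin t) (z z' : F₁ × ∀ i, G₁ i) :
    (K j).d₂ (Q.G₂Mul j z z') = Q.q₁ j (F.mul₁₁ (Q.toF₁ z) (Q.toF₁ z')) +
      Q.d₁ z • z'.2 j - Q.d₁ z' • z.2 j := by
  simp only [G₂Mul_apply, genForm_apply, map_add, map_sub, map_smul, (K j).leibniz₁₁,
    d₂_cycleLift, d₁_q₁MulGen, toF₁_snd_apply, d₁, LinearMap.comp_apply]
  module

theorem G₂Mul_single_single [Module.Free R F₁] (i j : Fin t) (g g' : G₁ i) :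
    Q.G₂Mul j (0, Pi.single i g) (0, Pi.single i g') =
      Pi.single i (-(F.d₁ (gen i) • (K i).mul₁₁ g g')) j := by
  simp only [G₂Mul_apply, genForm_apply, toF₁_single, map_smul, LinearMap.smul_apply,
    (Q.cycleLift_isAlt j).self_eq_zero]
  obtain rfl | h := eq_or_ne j i
  · simp [q₁MulGen_apply, F.isAlt.self_eq_zero]
  · simp [h]

theorem G₂Mul_mem [Module.Free R F₁] (hF₁ : ∀ a, F.d₁ a ∈ J ^ 2) {j : Fin t}
    (hK₁ : HasInjectiveLinearPart J (K j).d₁) (z : F₁ × ∀ i, G₁ i) {z' : F₁ × ∀ i, G₁ i}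
    (hz' : Q.toF₁ z' ∈ J • (⊤ : Submodule R (F₁ × (Fin t → R)))) :
    Q.G₂Mul j z z' ∈ J • (⊤ : Submodule R (G₂ j)) := by
  have hgen (y y') : Q.genForm j y y' ∈ J • (⊤ : Submodule R (G₂ j)) :=
    map_mem_smul_top J ((K j).mul₁₁.flip (y'.2 j)) (Q.q₁_mul₁₁_mem hF₁ hK₁ (Q.toF₁ y) (gen j))
  rw [G₂Mul_apply]
  exact sub_mem (add_mem (map_mem_smul_top J _ hz') (sub_mem (hgen _ _) (hgen _ _)))
    (Submodule.smul_mem_smul (Ideal.pow_le_self two_ne_zero (hF₁ _)) trivial)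

theorem G₂Mul_mem_sq [Module.Free R F₁] (hF₁ : ∀ a, F.d₁ a ∈ J ^ 2) {j : Fin t}
    (hK₁ : HasInjectiveLinearPart J (K j).d₁) {z z' : F₁ × ∀ i, G₁ i}
    (hz : Q.toF₁ z ∈ J • (⊤ : Submodule R (F₁ × (Fin t → R))))
    (hz' : Q.toF₁ z' ∈ J • (⊤ : Submodule R (F₁ × (Fin t → R)))) :
    Q.G₂Mul j z z' ∈ J ^ 2 • (⊤ : Submodule R (G₂ j)) := by
  have hgen {y} (hy : Q.toF₁ y ∈ J • (⊤ : Submodule R (F₁ × (Fin t → R)))) (y') :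
      Q.genForm j y y' ∈ J ^ 2 • (⊤ : Submodule R (G₂ j)) :=
    map_mem_sq_smul_top J ((K j).mul₁₁.flip (y'.2 j) ∘ₗ Q.q₁MulGen j)
      (fun a => map_mem_smul_top J ((K j).mul₁₁.flip (y'.2 j)) (Q.q₁_mul₁₁_mem hF₁ hK₁ a (gen j)))
      hy
  rw [G₂Mul_apply]
  exact sub_mem (add_mem (map₂_mem_sq_smul_top J _ hz hz') (sub_mem (hgen hz _) (hgen hz' _)))
    (Submodule.smul_mem_smul (hF₁ _) trivial)

theorem G₂Mul_inr_mem_sq [Module.Free R F₁] (hF₁ : ∀ a, F.d₁ a ∈ J ^ 2)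
    (hK₁ : ∀ i, HasInjectiveLinearPart J (K i).d₁) (j : Fin t) (z : F₁ × ∀ i, G₁ i)
    {g : ∀ i, G₁ i} (hg : g ∈ J • (⊤ : Submodule R (∀ i, G₁ i))) :
    Q.G₂Mul j z (0, g) ∈ J ^ 2 • (⊤ : Submodule R (G₂ j)) :=
  map_mem_sq_smul_top J (Q.G₂Mul j z ∘ₗ LinearMap.inr R F₁ (∀ i, G₁ i))
    (fun y => Q.G₂Mul_mem hF₁ (hK₁ j) z (Q.toF₁_inr_mem hK₁ y)) hg

/-- The product `T₁ × T₁ → T₂` of the trimming complex. -/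
noncomputable def mul₁₁ [Module.Free R F₁] :
    (F₁ × ∀ i, G₁ i) →ₗ[R] (F₁ × ∀ i, G₁ i) →ₗ[R] F₂ × ∀ i, G₂ i :=
  LinearMap.mk₂ R (fun z z' => (F.mul₁₁ (Q.toF₁ z) (Q.toF₁ z'), fun j => Q.G₂Mul j z z'))
    (by intros; ext <;> simp) (by intros; ext <;> simp)
    (by intros; ext <;> simp) (by intros; ext <;> simp)

theorem mul₁₁_apply [Module.Free R F₁] (z z' : F₁ × ∀ i, G₁ i) :
    Q.mul₁₁ z z' = (F.mul₁₁ (Q.toF₁ z) (Q.toF₁ z'), fun j => Q.G₂Mul j z z') := rfl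

theorem mul₁₁_isAlt [Module.Free R F₁] : Q.mul₁₁.IsAlt := fun z =>
  Prod.ext (F.isAlt _) (funext fun j => Q.G₂Mul_isAlt j z)

theorem leibniz₁₁ [Module.Free R F₁] (z z' : F₁ × ∀ i, G₁ i) :
    Q.d₂ (Q.mul₁₁ z z') = Q.d₁ z • z' - Q.d₁ z' • z := by
  refine Prod.ext ?_ (funext fun j => ?_)
  · rw [d₂_fst, mul₁₁_apply, F.leibniz₁₁]
    rfl
  · rw [d₂_snd_apply, mul₁₁_apply, d₂_G₂Mul]
    simp only [Prod.snd_sub, Prod.smul_snd, Pi.sub_apply, Pi.smul_apply]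
    abel

/-- The trimming complex as a DG-algebra resolution. -/
noncomputable def trimming [Module.Free R F₁] :
    DGResolution R (F₁ × ∀ i, G₁ i) (F₂ × ∀ i, G₂ i) (F₃ × ∀ i, G₃ i) :=
  .ofMul₁₁ Q.d₁ Q.d₂ Q.d₃ Q.mul₁₁ Q.exact₁ Q.exact₂ Q.injective₃ Q.mul₁₁_isAlt Q.leibniz₁₁

/-- The product `T₁ × T₂ → T₃` of the trimming complex. -/
noncomputable def mul₁₂ [Module.Free R F₁] :
    (F₁ × ∀ i, G₁ i) →ₗ[R] (F₂ × ∀ i, G₂ i) →ₗ[R] F₃ × ∀ i, G₃ i :=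
  Q.trimming.mul₁₂

theorem leibniz₁₂ [Module.Free R F₁] (z : F₁ × ∀ i, G₁ i) (w : F₂ × ∀ i, G₂ i) :
    Q.d₃ (Q.mul₁₂ z w) = Q.d₁ z • w - Q.mul₁₁ z (Q.d₂ w) :=
  Q.trimming.leibniz₁₂ z w

theorem mul₁₂_fst [Module.Free R F₁] (z : F₁ × ∀ i, G₁ i) (w : F₂ × ∀ i, G₂ i) :
    (Q.mul₁₂ z w).1 = F.mul₁₂ (Q.toF₁ z) w.1 := by
  apply F.injective₃
  rw [F.leibniz₁₂, ← Q.toF₁_d₂]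
  exact congrArg Prod.fst (Q.leibniz₁₂ z w)

theorem d₃_mul₁₂_snd_apply [Module.Free R F₁] (z : F₁ × ∀ i, G₁ i) (w : F₂ × ∀ i, G₂ i)
    (j : Fin t) : (K j).d₃ ((Q.mul₁₂ z w).2 j) =
      Q.d₁ z • w.2 j - Q.G₂Mul j z (Q.d₂ w) - Q.q₂ j (F.mul₁₂ (Q.toF₁ z) w.1) := by
  have h : (Q.d₃ (Q.mul₁₂ z w)).2 j = Q.d₁ z • w.2 j - Q.G₂Mul j z (Q.d₂ w) := by
    rw [leibniz₁₂]
    rfl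
  rw [← h, d₃_snd_apply, mul₁₂_fst, add_sub_cancel_left]

theorem d₂_inr (c : ∀ i, G₂ i) : Q.d₂ (0, c) = (0, fun i => (K i).d₂ (c i)) := by
  refine Prod.ext ?_ (funext fun i => ?_)
  · simp [d₂_fst]
  · simp [d₂_snd_apply]

theorem d₂_single (i : Fin t) (c : G₂ i) :
    Q.d₂ (0, Pi.single i c) = (0, Pi.single i ((K i).d₂ c)) := by
  refine (Q.d₂_inr _).trans (Prod.ext rfl (funext fun j => ?_))
  obtain rfl | h := eq_or_ne j i <;> simp [*]

theorem mul₁₂_single_single [Module.Free R F₁] (i : Fin t) (g : G₁ i) (c : G₂ i) :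
    Q.mul₁₂ (0, Pi.single i g) (0, Pi.single i c) =
      (0, Pi.single i (-(F.d₁ (gen i) • (K i).mul₁₂ g c))) := by
  refine Prod.ext (by rw [mul₁₂_fst, map_zero]) (funext fun j => (K j).injective₃ ?_)
  rw [d₃_mul₁₂_snd_apply, d₂_single, G₂Mul_single_single, d₁, LinearMap.comp_apply, toF₁_single]
  obtain rfl | h := eq_or_ne j i
  · simp only [Pi.single_eq_same, map_neg, map_smul, (K j).leibniz₁₂, map_zero]
    module
  · simp [h]

theorem trimDGAxioms [Module.Free R F₁] :
    TrimDGAxioms F.d₁ F.d₂ F.d₃ (fun i => (K i).d₁) (fun i => (K i).d₂) (fun i => (K i).d₃)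
      Q.q₁ Q.q₂ Q.mul₁₁ Q.mul₁₂ := by
  simp only [TrimDGAxioms, Q.Tl1_eq, Q.Tl2_eq, Q.Tl3_eq]
  exact ⟨Q.leibniz₁₁, Q.mul₁₁_isAlt, Q.trimming.mul₁₁_comm, Q.leibniz₁₂, Q.trimming.mul₁₂_assoc⟩

theorem trimDGFormulas [Module.Free R F₁] :
    TrimDGFormulas F.d₁ F.d₃ (fun i => (K i).d₁) (fun i => (K i).d₂) (fun i => (K i).d₃)
      Q.q₁ Q.q₂ F.mul₁₁ F.mul₁₂ (fun i => (K i).mul₁₁) (fun i => (K i).mul₁₂)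
      Q.mul₁₁ Q.mul₁₂ := by
  refine ⟨fun f f' => ⟨fun j => Q.G₂Mul j (f, 0) (f', 0), fun j => ?_, ?_⟩,
    fun f i g => ⟨fun j => Q.G₂Mul j (f, 0) (0, Pi.single i g), fun j => ?_, ?_⟩,
    fun i g g' => Prod.ext ?_ (funext fun j => Q.G₂Mul_single_single i j g g'),
    fun i j hij g g' => ⟨fun k => Q.G₂Mul k (0, Pi.single i g) (0, Pi.single j g'), fun k => ?_,
      Prod.ext ?_ rfl⟩,
    fun f w => ⟨_, Prod.ext ?_ rfl⟩, fun f i c => ⟨_, Prod.ext ?_ rfl⟩,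
    Q.mul₁₂_single_single, fun i j _ g c => ⟨_, Prod.ext ?_ rfl⟩,
    fun i g w => ⟨_, Prod.ext ?_ rfl⟩⟩
  · simp [d₂_G₂Mul, toF₁_inl]
  · rw [mul₁₁_apply, toF₁_inl, toF₁_inl]
  · rw [d₂_G₂Mul, d₁, LinearMap.comp_apply, toF₁_inl, toF₁_single, map_smul, F.mul₁₁_comm]
    obtain rfl | h := eq_or_ne j i <;> simp [*]
  · rw [mul₁₁_apply, toF₁_inl, toF₁_single, map_smul, F.mul₁₁_comm, neg_smul_neg]
  · rw [mul₁₁_apply, toF₁_single, toF₁_single]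
    simp only [map_smul, LinearMap.smul_apply, F.isAlt.self_eq_zero, smul_zero]
  · rw [d₂_G₂Mul, d₁, LinearMap.comp_apply, LinearMap.comp_apply, toF₁_single, toF₁_single]
    simp only [map_smul, LinearMap.smul_apply]
    obtain rfl | hi := eq_or_ne k i
    · simp only [Pi.single_eq_same, Pi.single_eq_of_ne hij.ne]
      module
    · obtain rfl | hj := eq_or_ne k j <;> simp [*] <;> module
  · rw [mul₁₁_apply, toF₁_single, toF₁_single]
    simp only [map_smul, LinearMap.smul_apply]
    module
  · rw [mul₁₂_fst, toF₁_inl]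
  · rw [mul₁₂_fst, map_zero]
  · rw [mul₁₂_fst, map_zero]
  · rw [mul₁₂_fst, toF₁_single, map_smul, LinearMap.smul_apply]

theorem mul₁₁_inr_mem [Module.Free R F₁] (hF₁ : ∀ a, F.d₁ a ∈ J ^ 2)
    (hK₁ : ∀ i, HasInjectiveLinearPart J (K i).d₁) (z : F₁ × ∀ i, G₁ i) (g : ∀ i, G₁ i) :
    Q.mul₁₁ z (0, g) ∈ J • (⊤ : Submodule R (F₂ × ∀ i, G₂ i)) :=
  have hg := Q.toF₁_inr_mem hK₁ g
  mem_prod_smul_top J (map_mem_smul_top J (F.mul₁₁ _) hg)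
    ((mem_pi_smul_top_iff J).2 fun j => Q.G₂Mul_mem hF₁ (hK₁ j) z hg)

theorem mul₁₁_sub_mem [Module.Free R F₁] (hF₁ : ∀ a, F.d₁ a ∈ J ^ 2)
    (hK₁ : ∀ i, HasInjectiveLinearPart J (K i).d₁) (z z' : F₁ × ∀ i, G₁ i) :
    Q.mul₁₁ z z' - Q.mul₁₁ (z.1, 0) (z'.1, 0) ∈
      J • (⊤ : Submodule R (F₂ × ∀ i, G₂ i)) := by
  have hsplit : Q.mul₁₁ z z' - Q.mul₁₁ (z.1, 0) (z'.1, 0) =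
      Q.mul₁₁ z (0, z'.2) - Q.mul₁₁ (z'.1, 0) (0, z.2) := by
    have hz : Q.mul₁₁ z = Q.mul₁₁ (z.1, 0) + Q.mul₁₁ (0, z.2) := by
      rw [← map_add, Prod.fst_add_snd]
    have hz' : Q.mul₁₁ z z' = Q.mul₁₁ z (z'.1, 0) + Q.mul₁₁ z (0, z'.2) := by
      rw [← map_add, Prod.fst_add_snd]
    rw [hz', ← Q.mul₁₁_isAlt.neg (0, z.2), hz, LinearMap.add_apply, LinearMap.add_apply]
    abel
  rw [hsplit]
  exact sub_mem (Q.mul₁₁_inr_mem hF₁ hK₁ _ _) (Q.mul₁₁_inr_mem hF₁ hK₁ _ _)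

theorem mul₁₂_inl_mem [Module.Free R F₁] (hF₁ : ∀ a, F.d₁ a ∈ J ^ 2)
    (hF₂ : ∀ w, F.d₂ w ∈ J • (⊤ : Submodule R (F₁ × (Fin t → R))))
    (hK₁ : ∀ i, HasInjectiveLinearPart J (K i).d₁) (hK₂ : ∀ i, HasInjectiveLinearPart J (K i).d₂)
    (hK₃ : ∀ i, HasInjectiveLinearPart J (K i).d₃) (g : ∀ i, G₁ i) (w : F₂ × ∀ i, G₂ i) :
    Q.mul₁₂ (0, g) w ∈ J • (⊤ : Submodule R (F₃ × ∀ i, G₃ i)) := by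
  have hg := Q.toF₁_inr_mem hK₁ g
  refine mem_prod_smul_top J ?_ ((mem_pi_smul_top_iff J).2 fun j => (hK₃ j).mem_of_map_mem_sq ?_)
  · rw [mul₁₂_fst]
    exact map_mem_smul_top J (F.mul₁₂.flip w.1) hg
  · rw [d₃_mul₁₂_snd_apply]
    refine sub_mem (sub_mem (Submodule.smul_mem_smul (hF₁ _) trivial) ?_) ?_
    · exact Q.G₂Mul_mem_sq hF₁ (hK₁ j) hg (by rw [toF₁_d₂]; exact hF₂ _)
    · exact map_mem_sq_smul_top J (Q.q₂ j ∘ₗ F.mul₁₂.flip w.1)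
        (fun a => Q.q₂_mul₁₂_mem hF₁ hF₂ (hK₁ j) (hK₂ j) a w.1) hg

theorem mul₁₂_inr_mem [Module.Free R F₁] (hF₁ : ∀ a, F.d₁ a ∈ J ^ 2)
    (hK₁ : ∀ i, HasInjectiveLinearPart J (K i).d₁) (hK₂ : ∀ i, HasInjectiveLinearPart J (K i).d₂)
    (hK₃ : ∀ i, HasInjectiveLinearPart J (K i).d₃) (z : F₁ × ∀ i, G₁ i) (c : ∀ i, G₂ i) :
    Q.mul₁₂ z (0, c) ∈ J • (⊤ : Submodule R (F₃ × ∀ i, G₃ i)) := by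
  refine mem_prod_smul_top J ?_ ((mem_pi_smul_top_iff J).2 fun j => (hK₃ j).mem_of_map_mem_sq ?_)
  · rw [mul₁₂_fst, map_zero]
    exact zero_mem _
  · rw [d₃_mul₁₂_snd_apply, d₂_inr, map_zero, map_zero, sub_zero]
    exact sub_mem (Submodule.smul_mem_smul (hF₁ _) trivial) <|
      Q.G₂Mul_inr_mem_sq hF₁ hK₁ j z <| (mem_pi_smul_top_iff J).2 fun i => (hK₂ i).map_mem _

theorem mul₁₂_sub_mem [Module.Free R F₁] (hF₁ : ∀ a, F.d₁ a ∈ J ^ 2)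
    (hF₂ : ∀ w, F.d₂ w ∈ J • (⊤ : Submodule R (F₁ × (Fin t → R))))
    (hK₁ : ∀ i, HasInjectiveLinearPart J (K i).d₁) (hK₂ : ∀ i, HasInjectiveLinearPart J (K i).d₂)
    (hK₃ : ∀ i, HasInjectiveLinearPart J (K i).d₃) (z : F₁ × ∀ i, G₁ i) (w : F₂ × ∀ i, G₂ i) :
    Q.mul₁₂ z w - Q.mul₁₂ (z.1, 0) (w.1, 0) ∈ J • (⊤ : Submodule R (F₃ × ∀ i, G₃ i)) := by
  have hsplit : Q.mul₁₂ z w - Q.mul₁₂ (z.1, 0) (w.1, 0) =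
      Q.mul₁₂ (0, z.2) w + Q.mul₁₂ (z.1, 0) (0, w.2) := by
    have hz : Q.mul₁₂ z = Q.mul₁₂ (z.1, 0) + Q.mul₁₂ (0, z.2) := by
      rw [← map_add, Prod.fst_add_snd]
    have hw : Q.mul₁₂ (z.1, 0) w = Q.mul₁₂ (z.1, 0) (w.1, 0) + Q.mul₁₂ (z.1, 0) (0, w.2) := by
      rw [← map_add, Prod.fst_add_snd]
    rw [hz, LinearMap.add_apply, hw]
    abel
  rw [hsplit]
  exact add_mem (Q.mul₁₂_inl_mem hF₁ hF₂ hK₁ hK₂ hK₃ _ _) (Q.mul₁₂_inr_mem hF₁ hK₁ hK₂ hK₃ _ _)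

end TrimmingMaps

theorem trimmed_ideal_trivial_products_general [Module.Free R F₁]
    (F : DGResolution R (F₁ × (Fin t → R)) F₂ F₃) (K : ∀ i, DGResolution R (G₁ i) (G₂ i) (G₃ i))
    (Q : TrimmingMaps F K) {J : Ideal R} (hF₁ : ∀ a, F.d₁ a ∈ J ^ 2)
    (hF₂ : ∀ w, F.d₂ w ∈ J • (⊤ : Submodule R (F₁ × (Fin t → R))))
    (hK₁ : ∀ i, HasInjectiveLinearPart J (K i).d₁) (hK₂ : ∀ i, HasInjectiveLinearPart J (K i).d₂)
    (hK₃ : ∀ i, HasInjectiveLinearPart J (K i).d₃) :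
    (∀ a b i, Q.q₁ i (F.mul₁₁ a b) ∈ J • (⊤ : Submodule R (G₁ i))) ∧
    (∀ a w i, Q.q₂ i (F.mul₁₂ a w) ∈ J • (⊤ : Submodule R (G₂ i))) ∧
    (∃ (t₁₁ : (F₁ × ∀ i, G₁ i) →ₗ[R] (F₁ × ∀ i, G₁ i) →ₗ[R] F₂ × ∀ i, G₂ i)
       (t₁₂ : (F₁ × ∀ i, G₁ i) →ₗ[R] (F₂ × ∀ i, G₂ i) →ₗ[R] F₃ × ∀ i, G₃ i),
      TrimDGAxioms F.d₁ F.d₂ F.d₃ (fun i => (K i).d₁) (fun i => (K i).d₂) (fun i => (K i).d₃)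
        Q.q₁ Q.q₂ t₁₁ t₁₂ ∧
      TrimDGFormulas F.d₁ F.d₃ (fun i => (K i).d₁) (fun i => (K i).d₂) (fun i => (K i).d₃)
        Q.q₁ Q.q₂ F.mul₁₁ F.mul₁₂ (fun i => (K i).mul₁₁) (fun i => (K i).mul₁₂) t₁₁ t₁₂ ∧
      (∀ z z', t₁₁ z z' - t₁₁ (z.1, 0) (z'.1, 0) ∈ J • (⊤ : Submodule R (F₂ × ∀ i, G₂ i))) ∧
      (∀ z w, t₁₂ z w - t₁₂ (z.1, 0) (w.1, 0) ∈ J • (⊤ : Submodule R (F₃ × ∀ i, G₃ i)))) :=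
  ⟨fun a b i => Q.q₁_mul₁₁_mem hF₁ (hK₁ i) a b,
    fun a w i => Q.q₂_mul₁₂_mem hF₁ hF₂ (hK₁ i) (hK₂ i) a w,
    Q.mul₁₁, Q.mul₁₂, Q.trimDGAxioms, Q.trimDGFormulas, Q.mul₁₁_sub_mem hF₁ hK₁,
    Q.mul₁₂_sub_mem hF₁ hF₂ hK₁ hK₂ hK₃⟩

end Trimming

theorem trimmed_ideal_trivial_products
    {R : Type} [CommRing R] [IsNoetherianRing R] [IsLocalRing R]
    -- `(R,𝔪,k)` regular local of dimension 3
    (x : Fin 3 → R)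
    (hreg : RingTheory.Sequence.IsRegular R [x 0, x 1, x 2])
    (hx : Ideal.span {x 0, x 1, x 2} = maximalIdeal R)
    (t : ℕ)
    (F1' F2 F3 : Type)
    [AddCommGroup F1'] [Module R F1'] [Module.Free R F1'] [Module.Finite R F1']
    [AddCommGroup F2] [Module R F2] [Module.Free R F2] [Module.Finite R F2]
    [AddCommGroup F3] [Module R F3] [Module.Free R F3] [Module.Finite R F3]
    (I : Ideal R)
    (d1 : (F1' × (Fin t → R)) →ₗ[R] R)
    (d2 : F2 →ₗ[R] (F1' × (Fin t → R)))
    (d3 : F3 →ₗ[R] F2)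
    -- `F` is a minimal free resolution of `R/I`, and `I ⊆ 𝔪²`
    (hFres0 : LinearMap.range d1 = I)
    (hFres1 : LinearMap.ker d1 = LinearMap.range d2)
    (hFres2 : LinearMap.ker d2 = LinearMap.range d3)
    (hFres3 : LinearMap.ker d3 = ⊥)
    (hI2 : ∀ a, d1 a ∈ maximalIdeal R ^ 2)
    (hminF2 : ∀ v, d2 v ∈ maximalIdeal R • (⊤ : Submodule R (F1' × (Fin t → R))))
    (hminF3 : ∀ w, d3 w ∈ maximalIdeal R • (⊤ : Submodule R F2))
    -- the Koszul complex `K` resolving `k = R/𝔪`, with its DG-algebra structure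
    (km1 : (Fin 3 → R) →ₗ[R] R) (km2 : (Fin 3 → R) →ₗ[R] (Fin 3 → R))
    (km3 : R →ₗ[R] (Fin 3 → R))
    (hkm1 : ∀ v, km1 v = v 0 * x 0 + v 1 * x 1 + v 2 * x 2)
    (hkm2 : ∀ w, km2 w = fun l =>
      if l = 0 then -(x 2 * w 1) - x 1 * w 2
      else if l = 1 then -(x 2 * w 0) + x 0 * w 2
      else x 1 * w 0 + x 0 * w 1)
    (hkm3 : ∀ r : R, km3 r = fun l =>
      if l = 0 then r * x 0 else if l = 1 then -(r * x 1) else r * x 2)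
    (k11 : (Fin 3 → R) →ₗ[R] (Fin 3 → R) →ₗ[R] (Fin 3 → R))
    (k12 : (Fin 3 → R) →ₗ[R] (Fin 3 → R) →ₗ[R] R)
    (hk11 : ∀ v w, k11 v w = fun l =>
      if l = 0 then v 1 * w 2 - v 2 * w 1
      else if l = 1 then v 0 * w 2 - v 2 * w 0
      else v 0 * w 1 - v 1 * w 0)
    (hk12 : ∀ v w, k12 v w = v 0 * w 0 - v 1 * w 1 + v 2 * w 2)
    -- the comparison maps `Q₁ = (q1 i)`, `Q₂ = (q2 i)` of the trimming complex
    (q1 : Fin t → (F2 →ₗ[R] (Fin 3 → R))) (q2 : Fin t → (F3 →ₗ[R] (Fin 3 → R)))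
    (hq1 : ∀ i v, km1 (q1 i v) = (d2 v).2 i)
    (hq2 : ∀ i w, km2 (q2 i w) = q1 i (d3 w))
    -- the DG-algebra structure on `F`
    (μ11 : (F1' × (Fin t → R)) →ₗ[R] (F1' × (Fin t → R)) →ₗ[R] F2)
    (μ12 : (F1' × (Fin t → R)) →ₗ[R] F2 →ₗ[R] F3)
    (hFleib1 : ∀ a b, d2 (μ11 a b) = d1 a • b - d1 b • a)
    (hFalt : ∀ a, μ11 a a = 0)
    (hFskew : ∀ a b, μ11 a b = - μ11 b a)
    (hFleib2 : ∀ a z, d3 (μ12 a z) = d1 a • z - μ11 a (d2 z))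
    (hFassoc : ∀ a b c, μ12 c (μ11 a b) = μ12 a (μ11 b c)) :
    -- (a)  the image of `F̄₁ · F̄₁` lies in `ker (Q₁ ⊗ k)`
    (∀ (u v : F1' × (Fin t → R)) (i : Fin t),
      q1 i (μ11 u v) ∈ maximalIdeal R • (⊤ : Submodule R (Fin 3 → R))) ∧
    -- (b)  the image of `F̄₁ · F̄₂` lies in `ker (Q₂ ⊗ k)`
    (∀ (u : F1' × (Fin t → R)) (w : F2) (i : Fin t),
      q2 i (μ12 u w) ∈ maximalIdeal R • (⊤ : Submodule R (Fin 3 → R))) ∧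
    -- (c)  for the DG-algebra structure of Theorem 3.2 on `T`, the only possibly
    -- nontrivial products in `T̄` are `F̄₁'·F̄₁'` and `F̄₁'·F̄₂`
    (∃ (t11 : (F1' × (∀ _ : Fin t, Fin 3 → R)) →ₗ[R]
          (F1' × (∀ _ : Fin t, Fin 3 → R)) →ₗ[R] (F2 × (∀ _ : Fin t, Fin 3 → R)))
       (t12 : (F1' × (∀ _ : Fin t, Fin 3 → R)) →ₗ[R]
          (F2 × (∀ _ : Fin t, Fin 3 → R)) →ₗ[R] (F3 × (∀ _ : Fin t, R))),
      TrimDGAxioms d1 d2 d3 (fun _ => km1) (fun _ => km2) (fun _ => km3) q1 q2 t11 t12 ∧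
      TrimDGFormulas d1 d3 (fun _ => km1) (fun _ => km2) (fun _ => km3) q1 q2 μ11 μ12
        (fun _ => k11) (fun _ => k12) t11 t12 ∧
      (∀ z z' : F1' × (∀ _ : Fin t, Fin 3 → R),
        t11 z z' - t11 (z.1, 0) (z'.1, 0) ∈
          maximalIdeal R • (⊤ : Submodule R (F2 × (∀ _ : Fin t, Fin 3 → R)))) ∧
      (∀ (z : F1' × (∀ _ : Fin t, Fin 3 → R)) (w : F2 × (∀ _ : Fin t, Fin 3 → R)),
        t12 z w - t12 (z.1, 0) (w.1, 0) ∈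
          maximalIdeal R • (⊤ : Submodule R (F3 × (∀ _ : Fin t, R))))) := by
  let F : DGResolution R (F1' × (Fin t → R)) F2 F3 :=
    { d₁ := d1, d₂ := d2, d₃ := d3, mul₁₁ := μ11, mul₁₂ := μ12
      exact₁ := LinearMap.exact_iff.2 hFres1
      exact₂ := LinearMap.exact_iff.2 hFres2
      injective₃ := LinearMap.ker_eq_bot.1 hFres3
      isAlt := hFalt
      leibniz₁₁ := hFleib1
      leibniz₁₂ := hFleib2 }
  have hK : IsKoszulComplex x km1 km2 km3 k11 k12 := ⟨hkm1, hkm2, hkm3, hk11, hk12⟩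
  have hx' := hreg.toIsWeaklyRegular
  let K : ∀ _ : Fin t, DGResolution R (Fin 3 → R) (Fin 3 → R) R := fun _ => hK.dgResolution hx'
  exact trimmed_ideal_trivial_products_general F K ⟨q1, q2, hq1, hq2⟩ hI2 hminF2
    (fun _ => hK.hasInjectiveLinearPart_d₁ hx' hx) (fun _ => hK.hasInjectiveLinearPart_d₂ hx' hx)
    (fun _ => hK.hasInjectiveLinearPart_d₃ hx' hx)
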